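/- For every real constant a, the function ξ(H,r) = (1/2)·log(−(H + a) + √((H+a)² + r²)) satisfies Joyce's equation ∂²ξ/∂H² + ∂²ξ/∂r² + (1/r)·∂ξ/∂r = 0 at every point (H,r) of the half-plane ℍ = {(H,r) ∈ ℝ² : r > 0}. -/

import Mathlib

/-!
Write `x = H + a` and `ρ = √(x² + r²)`. Since `(ρ - x)(ρ + x) = r²`, the first derivatives of `ξ`
simplify to `ξ_H = -1 / (2ρ)` and `ξ_r = (1 + x / ρ) / (2r)`. Hence `ξ_HH = x / (2ρ³)`, whereas
`ξ_rr + ξ_r / r = (r ξ_r)_r / r = -x / (2ρ³)`, and the two contributions cancel.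
-/

lemma rho_pos (x : ℝ) {r : ℝ} (hr : 0 < r) : 0 < Real.sqrt (x ^ 2 + r ^ 2) :=
  Real.sqrt_pos.2 (by positivity)

lemma neg_add_rho_pos (x : ℝ) {r : ℝ} (hr : 0 < r) : 0 < -x + Real.sqrt (x ^ 2 + r ^ 2) := by
  have : x < Real.sqrt (x ^ 2 + r ^ 2) := Real.lt_sqrt_of_sq_lt (by nlinarith)
  linarith

lemma hasDerivAt_rho_left (a h : ℝ) {r : ℝ} (hr : 0 < r) :
    HasDerivAt (fun h' : ℝ => Real.sqrt ((h' + a) ^ 2 + r ^ 2))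
      ((h + a) / Real.sqrt ((h + a) ^ 2 + r ^ 2)) h := by
  have h1 : HasDerivAt (fun h' : ℝ => (h' + a) ^ 2 + r ^ 2) (2 * (h + a)) h := by
    simpa using (((hasDerivAt_id h).add_const a).pow 2).add_const (r ^ 2)
  have h2 := h1.sqrt (by positivity)
  have := rho_pos (h + a) hr
  convert h2 using 1
  field_simp

lemma hasDerivAt_rho_right (x : ℝ) {s : ℝ} (hs : 0 < s) :
    HasDerivAt (fun s' : ℝ => Real.sqrt (x ^ 2 + s' ^ 2))
      (s / Real.sqrt (x ^ 2 + s ^ 2)) s := by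
  have h1 : HasDerivAt (fun s' : ℝ => x ^ 2 + s' ^ 2) (2 * s) s := by
    simpa using ((hasDerivAt_id s).pow 2).const_add (x ^ 2)
  have h2 := h1.sqrt (by positivity)
  have := rho_pos x hs
  convert h2 using 1
  field_simp

lemma hasDerivAt_xi_left (a h : ℝ) {r : ℝ} (hr : 0 < r) :
    HasDerivAt (fun h' : ℝ => (1/2) * Real.log (-(h' + a) + Real.sqrt ((h' + a)^2 + r^2)))
      (-(1/2) * (Real.sqrt ((h + a) ^ 2 + r ^ 2))⁻¹) h := by
  have hp := rho_pos (h + a) hr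
  have hq := neg_add_rho_pos (h + a) hr
  have h1 := (((((hasDerivAt_id h).add_const a).neg).add (hasDerivAt_rho_left a h hr)).log
    hq.ne').const_mul (1/2)
  refine h1.congr_deriv ?_
  simp only [id, Pi.add_apply, Pi.neg_apply]
  generalize Real.sqrt ((h + a) ^ 2 + r ^ 2) = ρ at *
  have := hq.ne'
  field_simp
  ring

lemma hasDerivAt_xi_right (x : ℝ) {s : ℝ} (hs : 0 < s) :
    HasDerivAt (fun s' : ℝ => (1/2) * Real.log (-x + Real.sqrt (x^2 + s'^2)))
      (1/2 * (s⁻¹ * (1 + x * (Real.sqrt (x ^ 2 + s ^ 2))⁻¹))) s := by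
  have hp := rho_pos x hs
  have hq := neg_add_rho_pos x hs
  have hsq : Real.sqrt (x ^ 2 + s ^ 2) ^ 2 = x ^ 2 + s ^ 2 := Real.sq_sqrt (by positivity)
  have h1 := (((hasDerivAt_rho_right x hs).const_add (-x)).log hq.ne').const_mul (1/2)
  refine h1.congr_deriv ?_
  generalize Real.sqrt (x ^ 2 + s ^ 2) = ρ at *
  have := hq.ne'
  field_simp
  linear_combination -hsq

/-- For every real constant `a`, the function
`ξ(H,r) = (1/2)·log(−(H + a) + √((H+a)² + r²))` satisfies Joyce's equation
`∂²ξ/∂H² + ∂²ξ/∂r² + (1/r)·∂ξ/∂r = 0` at every point of the half-plane `{r > 0}`. -/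
theorem joyce_solution_log_minus (a : ℝ) (H r : ℝ) (hr : 0 < r) :
    deriv (fun h : ℝ => deriv (fun h' : ℝ =>
        (1/2) * Real.log (-(h' + a) + Real.sqrt ((h' + a)^2 + r^2))) h) H
    + deriv (fun s : ℝ => deriv (fun s' : ℝ =>
        (1/2) * Real.log (-(H + a) + Real.sqrt ((H + a)^2 + s'^2))) s) r
    + (1/r) * deriv (fun s' : ℝ =>
        (1/2) * Real.log (-(H + a) + Real.sqrt ((H + a)^2 + s'^2))) r = 0 := by
  have hL : (fun h : ℝ => deriv (fun h' : ℝ =>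
      (1/2) * Real.log (-(h' + a) + Real.sqrt ((h' + a)^2 + r^2))) h) =
      fun h => -(1/2) * (Real.sqrt ((h + a) ^ 2 + r ^ 2))⁻¹ :=
    funext fun h => (hasDerivAt_xi_left a h hr).deriv
  -- The formula for `ξ_r` is only needed, and only claimed, on the open set `s > 0`.
  have hR : (fun s : ℝ => deriv (fun s' : ℝ =>
      (1/2) * Real.log (-(H + a) + Real.sqrt ((H + a)^2 + s'^2))) s) =ᶠ[nhds r]
      fun s => 1/2 * (s⁻¹ * (1 + (H + a) * (Real.sqrt ((H + a) ^ 2 + s ^ 2))⁻¹)) := by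
    filter_upwards [lt_mem_nhds hr] with s hs using (hasDerivAt_xi_right (H + a) hs).deriv
  have hp := rho_pos (H + a) hr
  have h1 := ((hasDerivAt_rho_left a H hr).fun_inv hp.ne').const_mul (-(1/2))
  have h2 := ((hasDerivAt_inv hr.ne').fun_mul
    ((((hasDerivAt_rho_right (H + a) hr).fun_inv hp.ne').const_mul (H + a)).const_add 1)).const_mul
      (1/2)
  rw [hL, hR.deriv_eq, h1.deriv, h2.deriv, (hasDerivAt_xi_right (H + a) hr).deriv]
  generalize Real.sqrt ((H + a) ^ 2 + r ^ 2) = ρ at *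
  field_simp
  ring
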